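/- arXiv:1911.08196 — 9 statements merged into one kernel-verified Lean document; each statement's English description precedes it below -/
import Mathlib

section
/- For every network defending instance with nonempty node set and every resource amount R ≥ 0, there exists a defending strategy r* with total resource R whose defending result equals the infimum, over all defending strategies with total resource R, of the defending result; i.e., an optimal defending strategy exists. -/
open scoped Classical

/-- A network defending instance: a finite simple undirected graph together with
nonnegative symmetric edge weights `w`, thresholds `LB ≤ UB`, and values `g' ≤ g`. -/
structure DefInstance (V : Type*) where
  G : SimpleGraph V
  w : V → V → ℝ
  w_nonneg : ∀ u v, 0 ≤ w u v
  w_symm : ∀ u v, w u v = w v u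
  LB : V → ℝ
  UB : V → ℝ
  g : V → ℝ
  g' : V → ℝ
  LB_nonneg : ∀ u, 0 ≤ LB u
  LB_le_UB : ∀ u, LB u ≤ UB u
  g'_nonneg : ∀ u, 0 ≤ g' u
  g'_le_g : ∀ u, g' u ≤ g u

variable {V : Type*} [Fintype V]

/-- The defending power of node `u` under resource allocation `r`:
`p_u = r_u + ∑_{v : (u,v) ∈ E} w_{uv} · r_v`. -/
noncomputable def power (I : DefInstance V) (r : V → ℝ) (u : V) : ℝ :=
  r u + ∑ v ∈ Finset.univ.filter (fun v => I.G.Adj u v), I.w u v * r v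

/-- The attacker's gain when attacking node `u`: it is `g_u` if `p_u < LB_u`;
it is `g'_u` if `LB_u ≤ p_u < UB_u` and some neighbor `v` has `p_v < LB_v`;
and `0` otherwise. -/
noncomputable def gain (I : DefInstance V) (r : V → ℝ) (u : V) : ℝ :=
  if power I r u < I.LB u then I.g u
  else if power I r u < I.UB u ∧ ∃ v, I.G.Adj u v ∧ power I r v < I.LB v then I.g' u
  else 0

/-- The defending result of `r`: the maximum attacker's gain over all nodes. -/
noncomputable def defResult (I : DefInstance V) (r : V → ℝ) : ℝ :=
  ⨆ u, gain I r u

/-- `r` is a defending strategy with total resource `R`. -/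
def IsStrategy (r : V → ℝ) (R : ℝ) : Prop :=
  (∀ u, 0 ≤ r u) ∧ ∑ u, r u = R

/-- The value `α` is achievable with resource `R`: some defending strategy with total
resource `R` has defending result at most `α`. -/
def Achievable (I : DefInstance V) (α R : ℝ) : Prop :=
  ∃ r, IsStrategy r R ∧ defResult I r ≤ α

/-- an optimal defending strategy exists: some strategy with total resource
`R` attains the infimum of the defending results over all strategies with total resource `R`. -/
theorem exists_optimal_strategy {V : Type*} [Fintype V] [Nonempty V]
    (I : DefInstance V) (R : ℝ) (hR : 0 ≤ R) :
    ∃ rstar : V → ℝ, IsStrategy rstar R ∧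
      defResult I rstar = sInf {β : ℝ | ∃ r, IsStrategy r R ∧ defResult I r = β} := by
  have hne : {β : ℝ | ∃ r, IsStrategy (V := V) r R ∧ defResult I r = β}.Nonempty := by
    refine ⟨_, Pi.single (Classical.arbitrary V) R, ⟨fun u => ?_, ?_⟩, rfl⟩
    · by_cases h : u = Classical.arbitrary V
      · subst h; simpa using hR
      · simp [Pi.single_apply, h]
    · simp [Pi.single_apply]
  have hfin : {β : ℝ | ∃ r, IsStrategy (V := V) r R ∧ defResult I r = β}.Finite := by
    refine (((Set.finite_range I.g).union (Set.finite_range I.g')).union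
      (Set.finite_singleton (0 : ℝ))).subset ?_
    rintro β ⟨r, -, rfl⟩
    obtain ⟨u, hu⟩ := exists_eq_ciSup_of_finite (f := gain I r)
    have hd : defResult I r = gain I r u := hu.symm
    rw [hd]
    unfold gain
    split_ifs
    · exact Or.inl (Or.inl ⟨u, rfl⟩)
    · exact Or.inl (Or.inr ⟨u, rfl⟩)
    · exact Or.inr rfl
  obtain ⟨r, hr, h⟩ := hne.csInf_mem hfin
  exact ⟨r, hr, h⟩
end

section
/- Let α ≥ 0 and R ≥ 0. The value α is achievable with resource R if and only if there exist a subset S ⊆ B_α and a defending strategy r with total resource R such that p_u ≥ UB_u for every u ∈ S and p_v ≥ LB_v for every v ∈ A_α ∪ ⋃_{u ∈ B_α∖S} N(u), where N(u) denotes the set of neighbors of u. -/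
open scoped Classical

variable {V : Type*} [Fintype V]

/-- `α` is achievable with resource `R` iff there are a subset `S ⊆ B_α` of
the crucial nodes and a strategy `r` with total resource `R` such that `p_u ≥ UB_u` for all
`u ∈ S` and `p_v ≥ LB_v` for all `v ∈ A_α ∪ ⋃_{u ∈ B_α∖S} N(u)`. -/
theorem achievable_iff_exists_subset {V : Type*} [Fintype V] [Nonempty V]
    (I : DefInstance V) (α R : ℝ) (hα : 0 ≤ α) (hR : 0 ≤ R) :
    Achievable I α R ↔
      ∃ S : Set V, S ⊆ {u | I.g' u > α} ∧
        ∃ r : V → ℝ, IsStrategy r R ∧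
          (∀ u ∈ S, I.UB u ≤ power I r u) ∧
          (∀ v, (I.g v > α ∨ ∃ u, I.g' u > α ∧ u ∉ S ∧ I.G.Adj u v) →
            I.LB v ≤ power I r v) := by
  constructor
  · rintro ⟨r, hr, hres⟩
    have hg : ∀ u, gain I r u ≤ α := fun u =>
      (le_ciSup (Set.finite_range (gain I r)).bddAbove u).trans hres
    have hA : ∀ v, I.g v > α → I.LB v ≤ power I r v := by
      intro v hv
      by_contra h
      have h1 := hg v
      unfold gain at h1
      rw [if_pos (not_le.mp h)] at h1
      linarith
    refine ⟨{u | I.g' u > α ∧ I.UB u ≤ power I r u}, fun u hu => hu.1, r, hr,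
      fun u hu => hu.2, ?_⟩
    rintro v (hv | ⟨u, hu, huS, huv⟩)
    · exact hA v hv
    · by_contra h
      have h2 : power I r u < I.UB u := by
        by_contra h3
        exact huS ⟨hu, not_lt.mp h3⟩
      have h1 := hg u
      have h4 := hA u (lt_of_lt_of_le hu (I.g'_le_g u))
      unfold gain at h1
      rw [if_neg (not_lt.mpr h4), if_pos ⟨h2, v, huv, not_le.mp h⟩] at h1
      linarith
  · rintro ⟨S, hS, r, hr, hU, hL⟩
    refine ⟨r, hr, ciSup_le fun u => ?_⟩
    unfold gain
    split_ifs with h1 h2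
    · by_contra h
      exact absurd (hL u (Or.inl (not_le.mp h))) (not_le.mpr h1)
    · by_contra h
      obtain ⟨h3, v, huv, hv⟩ := h2
      by_cases hu : u ∈ S
      · exact absurd (hU u hu) (not_le.mpr h3)
      · exact absurd (hL v (Or.inr ⟨u, not_le.mp h, hu, huv⟩)) (not_le.mpr hv)
    · exact hα
end

section
/- In an isolated network defending instance, for every α ≥ 0 and R ≥ 0: the value α is achievable with resource R if and only if there exists a subset S ⊆ B_α such that ∑_{u ∈ A_α∖S} LB_u + ∑_{u ∈ S} UB_u + ∑_{v ∈ (V∖A_α) ∩ N(B_α∖S)} LB_v ≤ R, where N(B_α∖S) = ⋃_{u ∈ B_α∖S} N(u) is the set of all neighbors of nodes in B_α∖S. In particular, the minimum total resource needed to achieve defending result at most α equals the minimum over S ⊆ B_α of this sum. -/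
open scoped Classical

variable {V : Type*} [Fintype V]

noncomputable def needAux (I : DefInstance V) (α : ℝ) (S : Finset V) (u : V) : ℝ :=
  if u ∈ S then I.UB u else if I.g u > α then I.LB u
  else if ∃ x, I.g' x > α ∧ x ∉ S ∧ I.G.Adj x u then I.LB u else 0

theorem needAux_nonneg (I : DefInstance V) (α : ℝ) (S : Finset V) (u : V) :
    0 ≤ needAux I α S u := by
  have h1 := I.LB_nonneg u
  have h2 := I.LB_le_UB u
  unfold needAux
  split_ifs <;> linarith

theorem cost_eq (I : DefInstance V) (α : ℝ) (S : Finset V) (hS : ∀ u ∈ S, I.g' u > α) :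
    ∑ u ∈ Finset.univ.filter (fun u => I.g u > α) \ S, I.LB u
          + ∑ u ∈ S, I.UB u
          + ∑ v ∈ Finset.univ.filter
              (fun v => ¬ I.g v > α ∧ ∃ u, I.g' u > α ∧ u ∉ S ∧ I.G.Adj u v), I.LB v
      = ∑ u, needAux I α S u := by
  have e1 : Finset.univ.filter (fun u => I.g u > α) \ S
      = Finset.univ.filter (fun u => I.g u > α ∧ u ∉ S) := by
    ext u; simp
  have e2 : ∑ u ∈ S, I.UB u = ∑ u ∈ Finset.univ.filter (fun u => u ∈ S), I.UB u := by
    congr 1; ext u; simp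
  rw [e1, e2, Finset.sum_filter, Finset.sum_filter, Finset.sum_filter,
    ← Finset.sum_add_distrib, ← Finset.sum_add_distrib]
  refine Finset.sum_congr rfl fun u _ => ?_
  unfold needAux
  by_cases h1 : u ∈ S
  · have h2 : I.g u > α := lt_of_lt_of_le (hS u h1) (I.g'_le_g u)
    simp [h1, h2]
  · by_cases h2 : I.g u > α
    · simp only [h1, h2]; simp
    · simp only [h1, h2]; simp

theorem power_iso (I : DefInstance V) (hiso : ∀ u v, I.G.Adj u v → I.w u v = 0)
    (r : V → ℝ) (u : V) : power I r u = r u := by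
  unfold power
  rw [Finset.sum_eq_zero, add_zero]
  intro v hv
  rw [hiso u v (by simpa using hv), zero_mul]

theorem achievable_iff_aux [Nonempty V] (I : DefInstance V)
    (hiso : ∀ u v, I.G.Adj u v → I.w u v = 0) (α R : ℝ) (hα : 0 ≤ α) :
    Achievable I α R ↔ ∃ S : Finset V, (∀ u ∈ S, I.g' u > α) ∧ ∑ u, needAux I α S u ≤ R := by
  constructor
  · rintro ⟨r, ⟨hr, hsum⟩, hres⟩
    have hg : ∀ u, gain I r u ≤ α := fun u =>
      (le_ciSup (Set.finite_range (gain I r)).bddAbove u).trans hres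
    simp only [gain, power_iso I hiso] at hg
    refine ⟨Finset.univ.filter (fun u => I.g' u > α ∧ I.UB u ≤ r u), ?_, ?_⟩
    · intro u hu
      exact (Finset.mem_filter.1 hu).2.1
    · rw [← hsum]
      refine Finset.sum_le_sum fun u _ => ?_
      unfold needAux
      split_ifs with h1 h2 h3
      · exact (Finset.mem_filter.1 h1).2.2
      · by_contra hlt
        have := hg u
        rw [if_pos (not_le.1 hlt)] at this
        linarith
      · obtain ⟨x, hx, hxS, hadj⟩ := h3
        by_contra hlt
        have hxu : r x < I.UB x := by
          by_contra hc
          exact hxS (by simp [hx, not_lt.1 hc])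
        have := hg x
        have hgx := I.g'_le_g x
        rw [if_pos (⟨hxu, u, hadj, not_le.1 hlt⟩ :
          r x < I.UB x ∧ ∃ v, I.G.Adj x v ∧ r v < I.LB v)] at this
        split_ifs at this <;> linarith
      · exact hr u
  · rintro ⟨S, hS, hle⟩
    obtain ⟨a⟩ := ‹Nonempty V›
    set d := R - ∑ u, needAux I α S u with hd
    have hd0 : 0 ≤ d := by linarith
    have hge : ∀ u, needAux I α S u ≤ needAux I α S u + if u = a then d else 0 := by
      intro u; split_ifs <;> linarith
    obtain ⟨r, hr⟩ : ∃ r : V → ℝ, r = fun u => needAux I α S u + if u = a then d else 0 :=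
      ⟨_, rfl⟩
    replace hge : ∀ u, needAux I α S u ≤ r u := by
      intro u; rw [hr]; exact hge u
    refine ⟨r, ⟨fun u => ?_, ?_⟩, ?_⟩
    · exact (needAux_nonneg I α S u).trans (hge u)
    · rw [hr, Finset.sum_add_distrib, Finset.sum_ite_eq' Finset.univ a]
      simp [hd]
    · have : Nonempty V := ⟨a⟩
      refine ciSup_le fun u => ?_
      have hA : ∀ v, I.g v > α → I.LB v ≤ needAux I α S v := by
        intro v hv
        have := I.LB_le_UB v
        unfold needAux
        split_ifs <;> linarith
      simp only [gain, power_iso I hiso]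
      split_ifs with h1 h2
      · by_contra hc
        linarith [hA u (not_le.1 hc), hge u]
      · obtain ⟨h3, v, hadj, hv⟩ := h2
        by_contra hc
        have hu := not_le.1 hc
        have huS : u ∉ S := by
          intro h
          have h4 := hge u
          have : needAux I α S u = I.UB u := by simp [needAux, h]
          linarith
        have : I.LB v ≤ needAux I α S v := by
          by_cases hgv : I.g v > α
          · exact hA v hgv
          · have := I.LB_le_UB v
            have hex : ∃ x, I.g' x > α ∧ x ∉ S ∧ I.G.Adj x v := ⟨u, hu, huS, hadj⟩
            unfold needAux
            split_ifs <;> linarith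
        linarith [hge v]
      · exact hα

/-- in an isolated instance, `α ≥ 0` is achievable with resource `R` iff some
`S ⊆ B_α` has `∑_{u∈A_α∖S} LB_u + ∑_{u∈S} UB_u + ∑_{v∈(V∖A_α)∩N(B_α∖S)} LB_v ≤ R`; in
particular the minimum resource needed to achieve `α` is the minimum of this sum over
`S ⊆ B_α`. -/
theorem isolated_achievable_iff {V : Type*} [Fintype V] [Nonempty V]
    (I : DefInstance V) (hiso : ∀ u v, I.G.Adj u v → I.w u v = 0)
    (α R : ℝ) (hα : 0 ≤ α) (hR : 0 ≤ R) :
    (Achievable I α R ↔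
      ∃ S : Finset V, (∀ u ∈ S, I.g' u > α) ∧
        ∑ u ∈ Finset.univ.filter (fun u => I.g u > α) \ S, I.LB u
          + ∑ u ∈ S, I.UB u
          + ∑ v ∈ Finset.univ.filter
              (fun v => ¬ I.g v > α ∧ ∃ u, I.g' u > α ∧ u ∉ S ∧ I.G.Adj u v), I.LB v
          ≤ R) ∧
    sInf {R' : ℝ | Achievable I α R'} =
      sInf ((fun S : Finset V =>
        ∑ u ∈ Finset.univ.filter (fun u => I.g u > α) \ S, I.LB u
          + ∑ u ∈ S, I.UB u
          + ∑ v ∈ Finset.univ.filter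
              (fun v => ¬ I.g v > α ∧ ∃ u, I.g' u > α ∧ u ∉ S ∧ I.G.Adj u v), I.LB v)
        '' {S : Finset V | ∀ u ∈ S, I.g' u > α}) := by
  constructor
  · rw [achievable_iff_aux I hiso α R hα]
    refine exists_congr fun S => and_congr_right fun hS => ?_
    rw [cost_eq I α S hS]
  · rw [Set.image_congr (s := {S : Finset V | ∀ u ∈ S, I.g' u > α}) (g := fun S : Finset V => ∑ u, needAux I α S u)
      (fun S hS => cost_eq I α S hS)]
    have hbd : BddBelow {R' : ℝ | Achievable I α R'} := by
      refine ⟨0, ?_⟩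
      rintro R' ⟨r, ⟨hr, hs⟩, -⟩
      rw [← hs]
      exact Finset.sum_nonneg fun u _ => hr u
    have hsub : ((fun S : Finset V => ∑ u, needAux I α S u) ''
        {S : Finset V | ∀ u ∈ S, I.g' u > α}) ⊆ {R' : ℝ | Achievable I α R'} := by
      rintro _ ⟨S, hS, rfl⟩
      exact (achievable_iff_aux I hiso α _ hα).2 ⟨S, hS, le_rfl⟩
    have hne : ((fun S : Finset V => ∑ u, needAux I α S u) ''
        {S : Finset V | ∀ u ∈ S, I.g' u > α}).Nonempty := ⟨_, ∅, by simp, rfl⟩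
    apply le_antisymm
    · exact csInf_le_csInf hbd hne hsub
    · refine le_csInf (hne.mono hsub) fun R' hR' => ?_
      obtain ⟨S, hS, hle⟩ := (achievable_iff_aux I hiso α R' hα).1 hR'
      exact (csInf_le (hbd.mono hsub) ⟨S, hS, rfl⟩).trans hle
end

section
/- (Reduction, forward direction) Let a DNF instance with p variables and q ≥ 1 clauses be given, let 1 ≤ t ≤ q, and suppose some truth assignment σ satisfies at least t clauses. Then the reduction instance admits a defending strategy with total resource p + (q−t)/q and defending result 0; in particular, the strategy that allocates 1 unit to each variable node whose literal is true under σ and 1/q to each clause node of a clause not satisfied by σ uses total resource at most p + (q−t)/q and has defending result 0. -/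
open scoped Classical

variable {V : Type*} [Fintype V]

/-! ### The reduction instance from a DNF instance

Variables are `x_1, …, x_p` and clauses are `C_1, …, C_q`; a literal is a pair
`(i, b) : Fin p × Bool`, where `(i, true)` is `x_i` and `(i, false)` is `x̄_i`.
The nodes of the reduction instance are: a variable node for each literal, a clause node
for each clause, and a connector node `(C_j, a)` for each literal `a` occurring in `C_j`
(connector nodes `(C_j, a)` with `a ∉ C_j` are present as isolated nodes carrying no
edges, zero value, and they play no role). -/

inductive RNode (p q : ℕ) : Type
  | var : Fin p → Bool → RNode p q
  | clause : Fin q → RNode p q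
  | conn : Fin q → Fin p → Bool → RNode p q
  deriving DecidableEq, Fintype

/-- Base relation generating the edges: `x_i — x̄_i`; and, for each literal `(i,b) ∈ C j`,
connector `(C_j,(i,b))` is joined to variable node `(i,b)` and to clause node `C_j`. -/
def redRel {p q : ℕ} (C : Fin q → Finset (Fin p × Bool)) :
    RNode p q → RNode p q → Prop := fun x y =>
  match x, y with
  | .var i _, .var i' _ => i = i'
  | .conn j i b, .var i' b' => i = i' ∧ b = b' ∧ (i, b) ∈ C j
  | .conn j i b, .clause j' => j = j' ∧ (i, b) ∈ C j
  | _, _ => False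

/-- Edge weights: `1` on edges incident to a variable node, `0` on edges incident to a
clause node. -/
noncomputable def redW {p q : ℕ} : RNode p q → RNode p q → ℝ := fun x y =>
  match x, y with
  | .clause _, _ => 0
  | _, .clause _ => 0
  | _, _ => 1

/-- Values: `g = g' = 1` on variable and clause nodes, `0` on connectors. -/
noncomputable def redg {p q : ℕ} : RNode p q → ℝ
  | .conn _ _ _ => 0
  | _ => 1

/-- Lower thresholds: `1` on variable nodes and connectors, `0` on clause nodes. -/
noncomputable def redLB {p q : ℕ} : RNode p q → ℝ
  | .clause _ => 0
  | _ => 1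

/-- Upper thresholds: `1` on variable nodes and connectors, `1/q` on clause nodes. -/
noncomputable def redUB {p q : ℕ} : RNode p q → ℝ
  | .clause _ => 1 / (q : ℝ)
  | _ => 1

/-- The reduction instance associated to a DNF instance. -/
noncomputable def redInstance (p q : ℕ) (C : Fin q → Finset (Fin p × Bool)) :
    DefInstance (RNode p q) where
  G := SimpleGraph.fromRel (redRel C)
  w := redW
  w_nonneg := by intro u v; cases u <;> cases v <;> norm_num [redW]
  w_symm := by intro u v; cases u <;> cases v <;> rfl
  LB := redLB
  UB := redUB
  g := redg
  g' := redg
  LB_nonneg := by intro u; cases u <;> norm_num [redLB]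
  LB_le_UB := by intro u; cases u <;> norm_num [redLB, redUB]
  g'_nonneg := by intro u; cases u <;> norm_num [redg]
  g'_le_g := fun _ => le_rfl

/-- An assignment `σ` satisfies a clause `Cl` if every literal of `Cl` is true under `σ`. -/
def Satisfies {p : ℕ} (σ : Fin p → Bool) (Cl : Finset (Fin p × Bool)) : Prop :=
  ∀ l ∈ Cl, σ l.1 = l.2

/-- The defending strategy built from an assignment `σ`: `1` on each variable node whose
literal is true under `σ`, `1/q` on each clause node of a clause unsatisfied by `σ`,
and `0` on connectors. -/
noncomputable def redStrategy {p q : ℕ} (C : Fin q → Finset (Fin p × Bool))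
    (σ : Fin p → Bool) : RNode p q → ℝ
  | .var i b => if σ i = b then 1 else 0
  | .clause j => if Satisfies σ (C j) then 0 else 1 / (q : ℝ)
  | .conn _ _ _ => 0

theorem aux_power_nonneg_le (I : DefInstance V) (r : V → ℝ) (hr : ∀ u, 0 ≤ r u) (u : V) :
    r u ≤ power I r u := by
  unfold power
  have : 0 ≤ ∑ v ∈ Finset.univ.filter (fun v => I.G.Adj u v), I.w u v * r v :=
    Finset.sum_nonneg fun v _ => mul_nonneg (I.w_nonneg u v) (hr v)
  linarith

theorem aux_power_adj (I : DefInstance V) (r : V → ℝ) (hr : ∀ u, 0 ≤ r u) (u v : V)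
    (h : I.G.Adj u v) : I.w u v * r v ≤ power I r u := by
  unfold power
  have := Finset.single_le_sum (s := Finset.univ.filter (fun v => I.G.Adj u v))
    (f := fun v => I.w u v * r v)
    (fun v _ => mul_nonneg (I.w_nonneg u v) (hr v)) (Finset.mem_filter.2 ⟨Finset.mem_univ v, h⟩)
  have h2 := hr u
  linarith

theorem aux_strat_nonneg {p q : ℕ} (C : Fin q → Finset (Fin p × Bool)) (σ : Fin p → Bool)
    (x : RNode p q) : 0 ≤ redStrategy C σ x := by
  cases x <;> simp only [redStrategy]
  · split_ifs <;> norm_num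
  · split_ifs <;> positivity
  · exact le_rfl

theorem aux_def {p q : ℕ} (hq : 1 ≤ q) (C : Fin q → Finset (Fin p × Bool)) (σ : Fin p → Bool)
    (r : RNode p q → ℝ) (hr : ∀ x, redStrategy C σ x ≤ r x) :
    defResult (redInstance p q C) r = 0 := by
  have h0 : ∀ x, 0 ≤ r x := fun x => (aux_strat_nonneg C σ x).trans (hr x)
  have hlit : ∀ i, 1 ≤ r (.var i (σ i)) := fun i => by
    have := hr (.var i (σ i))
    simpa [redStrategy] using this
  have hg : ∀ u, gain (redInstance p q C) r u = 0 := by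
    intro u
    have hself := aux_power_nonneg_le (redInstance p q C) r h0 u
    unfold gain
    cases u with
    | conn j i b => simp [redInstance, redg]
    | var i b =>
      have hp : 1 ≤ power (redInstance p q C) r (.var i b) := by
        by_cases hb : σ i = b
        · subst hb; exact (hlit i).trans hself
        · have := aux_power_adj (redInstance p q C) r h0 (.var i b) (.var i (σ i))
            (by
              simp only [redInstance, SimpleGraph.fromRel_adj, redRel]
              refine ⟨?_, Or.inl trivial⟩
              intro h
              injection h with _ h
              exact hb h.symm)
          simp only [redInstance, redW, one_mul] at this
          exact (hlit i).trans this
      have hn : ¬ power (redInstance p q C) r (.var i b) < (redInstance p q C).LB (.var i b) :=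
        not_lt.2 hp
      rw [if_neg hn, if_neg]
      rintro ⟨h, _⟩
      exact absurd h (not_lt.2 hp)
    | clause j =>
      have hn : ¬ power (redInstance p q C) r (.clause j) < (redInstance p q C).LB (.clause j) :=
        not_lt.2 ((h0 _).trans hself)
      rw [if_neg hn, if_neg]
      rintro ⟨h, v, hadj, hv⟩
      by_cases hs : Satisfies σ (C j)
      · simp only [redInstance, SimpleGraph.fromRel_adj] at hadj
        cases v with
        | var i b => simp [redRel] at hadj
        | clause j' => simp [redRel] at hadj
        | conn j' i b =>
          simp only [redRel] at hadj
          obtain ⟨_, h | ⟨rfl, hm⟩⟩ := hadj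
          · exact h
          · have hb : σ i = b := hs _ hm
            subst hb
            have := aux_power_adj (redInstance p q C) r h0 (.conn j' i (σ i)) (.var i (σ i))
              (by
                simp only [redInstance, SimpleGraph.fromRel_adj, redRel]
                exact ⟨by simp, Or.inl ⟨trivial, trivial, hm⟩⟩)
            simp only [redInstance, redW, one_mul] at this
            exact absurd hv (not_lt.2 ((hlit i).trans this))
      · have := hr (.clause j)
        simp only [redStrategy, if_neg hs] at this
        exact absurd h (not_lt.2 (this.trans hself))
  unfold defResult
  simp [hg]

def auxEquiv (p q : ℕ) :
    RNode p q ≃ (Fin p × Bool) ⊕ (Fin q) ⊕ (Fin q × Fin p × Bool) where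
  toFun x := match x with
    | .var i b => .inl (i, b)
    | .clause j => .inr (.inl j)
    | .conn j i b => .inr (.inr (j, i, b))
  invFun x := match x with
    | .inl (i, b) => .var i b
    | .inr (.inl j) => .clause j
    | .inr (.inr (j, i, b)) => .conn j i b
  left_inv x := by cases x <;> rfl
  right_inv x := by rcases x with _ | _ | _ <;> rfl

theorem aux_sum {p q : ℕ} (hq : 1 ≤ q) (C : Fin q → Finset (Fin p × Bool))
    (t : ℕ) (σ : Fin p → Bool)
    (hσ : t ≤ (Finset.univ.filter fun j => Satisfies σ (C j)).card) :
    ∑ x, redStrategy C σ x ≤ (p : ℝ) + ((q : ℝ) - (t : ℝ)) / (q : ℝ) := by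
  rw [← (auxEquiv p q).symm.sum_comp]
  rw [Fintype.sum_sum_type, Fintype.sum_sum_type, Fintype.sum_prod_type]
  simp only [auxEquiv, Equiv.coe_fn_symm_mk, redStrategy, Finset.sum_const_zero, add_zero]
  have h1 : ∑ x : Fin p, ∑ y : Bool, (if σ x = y then (1 : ℝ) else 0) = p := by simp
  rw [h1]
  gcongr
  rw [Finset.sum_ite, Finset.sum_const_zero, zero_add, Finset.sum_const, nsmul_eq_mul,
    mul_one_div]
  have h2 := Finset.card_filter_add_card_filter_not (s := (Finset.univ : Finset (Fin q)))
    (fun j => Satisfies σ (C j))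
  rw [Finset.card_univ, Fintype.card_fin] at h2
  have h3 : ((Finset.univ.filter fun j => Satisfies σ (C j)).card : ℝ)
    + ((Finset.univ.filter fun j => ¬ Satisfies σ (C j)).card : ℝ) = q := by exact_mod_cast h2
  have h4 : (t : ℝ) ≤ ((Finset.univ.filter fun j => Satisfies σ (C j)).card : ℝ) := by
    exact_mod_cast hσ
  gcongr
  linarith

/-- reduction, forward direction: if `σ` satisfies at least `t` of the `q`
clauses, then the above strategy is nonnegative, uses total resource at most
`p + (q - t)/q`, and has defending result `0`; in particular the reduction instance admits
a defending strategy with total resource `p + (q - t)/q` and defending result `0`. -/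
theorem reduction_forward (p q : ℕ) (hq : 1 ≤ q) (C : Fin q → Finset (Fin p × Bool))
    (t : ℕ) (ht : 1 ≤ t) (htq : t ≤ q) (σ : Fin p → Bool)
    (hσ : t ≤ (Finset.univ.filter fun j => Satisfies σ (C j)).card) :
    (∀ x, 0 ≤ redStrategy C σ x) ∧
    (∑ x, redStrategy C σ x ≤ (p : ℝ) + ((q : ℝ) - (t : ℝ)) / (q : ℝ)) ∧
    defResult (redInstance p q C) (redStrategy C σ) = 0 ∧
    ∃ r : RNode p q → ℝ, IsStrategy r ((p : ℝ) + ((q : ℝ) - (t : ℝ)) / (q : ℝ)) ∧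
      defResult (redInstance p q C) r = 0 := by
  have hs := aux_sum hq C t σ hσ
  refine ⟨aux_strat_nonneg C σ, hs, aux_def hq C σ _ fun _ => le_rfl, ?_⟩
  set R : ℝ := (p : ℝ) + ((q : ℝ) - (t : ℝ)) / (q : ℝ) with hR
  have hle : ∀ x, redStrategy C σ x ≤ redStrategy C σ x +
      Pi.single (M := fun _ => ℝ) (RNode.clause ⟨0, hq⟩)
        (R - ∑ x, redStrategy C σ x) x := by
    intro x
    have : (0 : RNode p q → ℝ) ≤ Pi.single (M := fun _ => ℝ) (RNode.clause ⟨0, hq⟩)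
        (R - ∑ x, redStrategy C σ x) := Pi.single_nonneg.2 (by linarith)
    have h := this x
    simp only [Pi.zero_apply] at h
    linarith
  refine ⟨_, ⟨fun x => (aux_strat_nonneg C σ x).trans (hle x), ?_⟩, aux_def hq C σ _ hle⟩
  rw [Finset.sum_add_distrib, Finset.sum_pi_single']
  simp
end

section
/- (Canonical transformation) For every defending strategy r on the reduction instance there exists a defending strategy r' with the same total resource such that: the defending result of r' is at most the defending result of r; r'_c = 0 for every connector node c; and for every variable node u, either r'_u = 0 or r'_u ≥ 1. -/
open scoped Classical

variable {V : Type*} [Fintype V]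

def rnodeEquiv (p q : ℕ) :
    RNode p q ≃ (Fin p × Bool) ⊕ (Fin q ⊕ (Fin q × Fin p × Bool)) where
  toFun x := match x with
    | .var i b => .inl (i, b)
    | .clause j => .inr (.inl j)
    | .conn j i b => .inr (.inr (j, i, b))
  invFun x := match x with
    | .inl (i, b) => .var i b
    | .inr (.inl j) => .clause j
    | .inr (.inr (j, i, b)) => .conn j i b
  left_inv x := by cases x <;> rfl
  right_inv x := by rcases x with ⟨i, b⟩ | j | ⟨j, i, b⟩ <;> rfl

lemma rnode_sum {p q : ℕ} (f : RNode p q → ℝ) :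
    ∑ x, f x = (∑ i, (f (.var i true) + f (.var i false))) + ∑ j, f (.clause j)
      + ∑ i, ∑ j, (f (.conn j i true) + f (.conn j i false)) := by
  rw [← Equiv.sum_comp (rnodeEquiv p q).symm f]
  simp only [Fintype.sum_sum_type, Fintype.sum_prod_type, Fintype.sum_bool]
  rw [Finset.sum_comm (s := (Finset.univ : Finset (Fin q)))
    (t := (Finset.univ : Finset (Fin p)))]
  simp only [rnodeEquiv, Equiv.coe_fn_symm_mk]
  ring

lemma power_var {p q : ℕ} (C : Fin q → Finset (Fin p × Bool)) (r : RNode p q → ℝ)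
    (i : Fin p) (b : Bool) :
    power (redInstance p q C) r (.var i b) = r (.var i true) + r (.var i false)
      + ∑ j, if (i, b) ∈ C j then r (.conn j i b) else 0 := by
  have h : ∀ i', (i = i') = (i' = i) := fun i' => propext eq_comm
  unfold power
  rw [Finset.sum_filter, rnode_sum]
  cases b <;>
  simp [redInstance, redRel, redW, SimpleGraph.fromRel_adj, Finset.sum_comm (s := (Finset.univ : Finset (Fin p))), h, ite_and] <;> ring

lemma power_clause {p q : ℕ} (C : Fin q → Finset (Fin p × Bool)) (r : RNode p q → ℝ)
    (j : Fin q) :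
    power (redInstance p q C) r (.clause j) = r (.clause j) := by
  simp [power, redInstance, redW]

lemma power_conn {p q : ℕ} (C : Fin q → Finset (Fin p × Bool)) (r : RNode p q → ℝ)
    (j : Fin q) (i : Fin p) (b : Bool) (hm : (i, b) ∈ C j) :
    power (redInstance p q C) r (.conn j i b) = r (.conn j i b) + r (.var i b) := by
  have h : ∀ i', (i = i') = (i' = i) := fun i' => propext eq_comm
  unfold power
  rw [Finset.sum_filter, rnode_sum]
  cases b <;>
  simp [redInstance, redRel, redW, SimpleGraph.fromRel_adj, h, ite_and, hm]

lemma gain_le_one {p q : ℕ} (C : Fin q → Finset (Fin p × Bool)) (r : RNode p q → ℝ)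
    (x : RNode p q) : gain (redInstance p q C) r x ≤ 1 := by
  unfold gain
  have : redg x ≤ 1 := by cases x <;> norm_num [redg]
  split_ifs <;> simp [redInstance, this]

lemma gain_nonneg {p q : ℕ} (C : Fin q → Finset (Fin p × Bool)) (r : RNode p q → ℝ)
    (x : RNode p q) : 0 ≤ gain (redInstance p q C) r x := by
  unfold gain
  have : 0 ≤ redg x := by cases x <;> norm_num [redg]
  split_ifs <;> simp [redInstance, this]

lemma adj_clause {p q : ℕ} (C : Fin q → Finset (Fin p × Bool)) (j : Fin q) (v : RNode p q) :
    (redInstance p q C).G.Adj (.clause j) v ↔ ∃ i b, v = .conn j i b ∧ (i, b) ∈ C j := by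
  cases v <;> simp [redInstance, redRel, SimpleGraph.fromRel_adj]
  · rename_i j' i b
    cases b <;> simp <;> grind

theorem canonical_transformation (p q : ℕ) (hq : 1 ≤ q)
    (C : Fin q → Finset (Fin p × Bool)) (r : RNode p q → ℝ) (hr : ∀ x, 0 ≤ r x) :
    ∃ r' : RNode p q → ℝ, (∀ x, 0 ≤ r' x) ∧ (∑ x, r' x = ∑ x, r x) ∧
      defResult (redInstance p q C) r' ≤ defResult (redInstance p q C) r ∧
      (∀ j i b, r' (.conn j i b) = 0) ∧
      (∀ i b, r' (.var i b) = 0 ∨ 1 ≤ r' (.var i b)) := by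
  have hne : Nonempty (RNode p q) := ⟨.clause ⟨0, hq⟩⟩
  have hbdd : BddAbove (Set.range (gain (redInstance p q C) r)) :=
    ⟨1, by rintro _ ⟨x, rfl⟩; exact gain_le_one C r x⟩
  by_cases hcase : 1 ≤ defResult (redInstance p q C) r
  · refine ⟨fun x => if x = .clause ⟨0, hq⟩ then ∑ y, r y else 0, ?_, ?_, ?_, ?_, ?_⟩
    · intro x
      dsimp only
      split_ifs
      · exact Finset.sum_nonneg fun y _ => hr y
      · exact le_rfl
    · simp
    · exact le_trans (ciSup_le fun x => gain_le_one C _ x) hcase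
    · intro j i b; simp
    · intro i b; left; simp
  · have hlt : ∀ x, gain (redInstance p q C) r x < 1 := fun x =>
      lt_of_le_of_lt (le_ciSup hbdd x) (not_le.mp hcase)
    let T : Fin p → ℝ := fun i => r (.var i true) + r (.var i false)
      + ∑ j, (r (.conn j i true) + r (.conn j i false))
    have hsum : ∀ i b, (∑ j, if (i, b) ∈ C j then r (.conn j i b) else 0)
        ≤ ∑ j, r (.conn j i b) := fun i b => Finset.sum_le_sum fun j _ => by
      split_ifs
      · exact le_rfl
      · exact hr _
    have hsn : ∀ i b, 0 ≤ ∑ j, r (.conn j i b) := fun i b =>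
      Finset.sum_nonneg fun j _ => hr _
    have hT' : ∀ i, T i = r (.var i true) + r (.var i false)
      + (∑ j, r (.conn j i true) + ∑ j, r (.conn j i false)) := fun i => by
      simp only [T, Finset.sum_add_distrib]
    have hT : ∀ i, 1 ≤ T i := by
      intro i
      have h := hlt (.var i true)
      have hp : 1 ≤ power (redInstance p q C) r (.var i true) := by
        by_contra hc
        rw [not_le] at hc
        unfold gain at h
        rw [if_pos (show _ < (redInstance p q C).LB _ from hc)] at h
        simp [redInstance, redg] at h
      rw [power_var] at hp
      have := hsum i true
      have := hsn i false
      rw [hT']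
      linarith
    let good : Fin p → Bool → Prop := fun i b =>
      ∃ j, 1 ≤ r (.conn j i b) + r (.var i b)
    have hgood : ∀ i b, good i b → 1 ≤ r (.var i b) + ∑ j, r (.conn j i b) := by
      rintro i b ⟨j, hj⟩
      have := Finset.single_le_sum (f := fun j => r (.conn j i b))
        (fun j _ => hr _) (Finset.mem_univ j)
      linarith
    let r' : RNode p q → ℝ := fun x => match x with
      | .var i true => if good i true then (if good i false then T i - 1 else T i) else 0
      | .var i false => if good i true then (if good i false then 1 else 0) else T i
      | .clause j => r (.clause j)
      | .conn _ _ _ => 0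
    have hvs : ∀ i, r' (.var i true) + r' (.var i false) = T i := by
      intro i
      simp only [r']
      split_ifs <;> ring
    have hv1 : ∀ i b, r' (.var i b) = 0 ∨ 1 ≤ r' (.var i b) := by
      intro i b
      have h0 := hT i
      have h1 := hT' i
      cases b <;> simp only [r'] <;> split_ifs with ha hb <;> try simp [h0]
      · have := hgood i _ ha
        have := hgood i _ hb
        right; linarith
    have hv2 : ∀ i b, good i b → 1 ≤ r' (.var i b) := by
      intro i b hg
      have h0 := hT i
      have h1 := hT' i
      cases b
      · simp only [r']
        split_ifs <;> simp [h0]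
      · simp only [r', if_pos hg]
        split_ifs with hb
        · have := hgood i _ hg
          have := hgood i _ hb
          linarith
        · exact h0
    have hnn : ∀ x, 0 ≤ r' x := by
      intro x
      cases x with
      | var i b => rcases hv1 i b with h | h <;> linarith
      | clause j => exact hr _
      | conn j i b => exact le_rfl
    refine ⟨r', hnn, ?_, ?_, fun _ _ _ => rfl, hv1⟩
    · rw [rnode_sum r', rnode_sum r]
      simp only [hvs]
      simp only [r', T, Finset.sum_add_distrib, Finset.sum_const_zero, add_zero]
      ring
    · refine le_trans (ciSup_le (c := 0) fun x => ?_)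
        (le_trans (gain_nonneg C r (.clause ⟨0, hq⟩)) (le_ciSup hbdd _))
      cases x with
      | var i b =>
        have hp : 1 ≤ power (redInstance p q C) r' (.var i b) := by
          rw [power_var, hvs]
          have := hT i
          simp only [r', ite_self, Finset.sum_const_zero]
          linarith
        unfold gain
        rw [if_neg (show ¬ _ < (redInstance p q C).LB _ from not_lt.mpr hp),
          if_neg (fun h => absurd (show _ < (1:ℝ) from h.1) (not_lt.mpr hp))]
      | conn j i b =>
        unfold gain
        split_ifs <;> simp [redInstance, redg]
      | clause j =>
        have hp : ∀ s : RNode p q → ℝ, (∀ x, 0 ≤ s x) →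
            ¬ power (redInstance p q C) s (.clause j) < (redInstance p q C).LB (.clause j) := by
          intro s hs
          rw [power_clause]
          exact not_lt.mpr (hs _)
        unfold gain
        rw [if_neg (hp r' hnn), if_neg]
        rintro ⟨hU, v, hadj, hv⟩
        obtain ⟨i, b, rfl, hm⟩ := (adj_clause C j v).mp hadj
        have hg := hlt (.clause j)
        unfold gain at hg
        rw [if_neg (hp r hr)] at hg
        have hgd : good i b := by
          refine ⟨j, ?_⟩
          by_contra hc
          rw [if_pos] at hg
          · simp [redInstance, redg] at hg
          · refine ⟨?_, _, hadj, ?_⟩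
            · rw [power_clause] at hU ⊢
              exact hU
            · rw [power_conn C r j i b hm]
              exact not_le.mp hc
        rw [power_conn C r' j i b hm] at hv
        have h1 := hv2 i b hgd
        have h2 := hnn (.conn j i b)
        have h3 : r' (.conn j i b) + r' (.var i b) < 1 := hv
        linarith
end

section
/- (Reduction, backward direction) Let a DNF instance with p variables and q ≥ 1 clauses be given and let 1 ≤ t ≤ q. If the reduction instance admits a defending strategy with total resource p + (q−t)/q and defending result 0, then there exists a truth assignment to x_1,…,x_p that satisfies at least t clauses. -/
open scoped Classical

variable {V : Type*} [Fintype V]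

def rEquiv (p q : ℕ) : ((Fin p × Bool) ⊕ (Fin q ⊕ (Fin q × Fin p × Bool))) ≃ RNode p q where
  toFun
    | .inl (i, b) => .var i b
    | .inr (.inl j) => .clause j
    | .inr (.inr (j, i, b)) => .conn j i b
  invFun
    | .var i b => .inl (i, b)
    | .clause j => .inr (.inl j)
    | .conn j i b => .inr (.inr (j, i, b))
  left_inv := by rintro (⟨i, b⟩ | j | ⟨j, i, b⟩) <;> rfl
  right_inv := by rintro (⟨i, b⟩ | j | ⟨j, i, b⟩) <;> rfl

lemma sum_rnode {p q : ℕ} (f : RNode p q → ℝ) :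
    ∑ u, f u = ∑ i, ∑ b, f (.var i b) + (∑ j, f (.clause j) + ∑ j, ∑ i, ∑ b, f (.conn j i b)) := by
  rw [← (rEquiv p q).sum_comp f]
  simp only [Fintype.sum_sum_type, Fintype.sum_prod_type]
  rfl

lemma power_conn_le {p q : ℕ} (C : Fin q → Finset (Fin p × Bool)) (r : RNode p q → ℝ)
    (hr : ∀ u, 0 ≤ r u) (j : Fin q) (i : Fin p) (b : Bool) :
    power (redInstance p q C) r (.conn j i b) ≤ r (.conn j i b) + r (.var i b) := by
  unfold power
  rw [Finset.sum_filter, sum_rnode]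
  have h1 : ∀ i' b', (if (redInstance p q C).G.Adj (.conn j i b) (.var i' b') then
      (redInstance p q C).w (.conn j i b) (.var i' b') * r (.var i' b') else 0) ≤
      if i' = i then (if b' = b then r (.var i' b') else 0) else 0 := by
    intro i' b'
    have := hr (.var i' b')
    simp only [redInstance, SimpleGraph.fromRel_adj, redRel, redW]
    split_ifs <;> simp_all
  have h2 : ∀ j', (if (redInstance p q C).G.Adj (.conn j i b) (.clause j') then
      (redInstance p q C).w (.conn j i b) (.clause j') * r (.clause j') else 0) = 0 := by
    intro j'
    simp [redInstance, redW]
  have h3 : ∀ j' i' b', (if (redInstance p q C).G.Adj (.conn j i b) (.conn j' i' b') then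
      (redInstance p q C).w (.conn j i b) (.conn j' i' b') * r (.conn j' i' b') else 0) = 0 := by
    intro j' i' b'
    simp [redInstance, redRel]
  simp only [h2, h3]
  have := Finset.sum_le_sum fun i' (_ : i' ∈ Finset.univ) =>
    Finset.sum_le_sum fun b' (_ : b' ∈ Finset.univ) => h1 i' b'
  have e : ∑ i' : Fin p, ∑ b' : Bool, (if i' = i then (if b' = b then r (.var i' b') else 0) else 0)
      = r (.var i b) := by
    rw [Finset.sum_eq_single i (by intro x _ hx; simp [hx]) (by simp)]
    simp
  rw [e] at this
  simp only [Finset.sum_const_zero]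
  linarith

lemma power_var_le {p q : ℕ} (C : Fin q → Finset (Fin p × Bool)) (r : RNode p q → ℝ)
    (hr : ∀ u, 0 ≤ r u) (i : Fin p) (b : Bool) :
    power (redInstance p q C) r (.var i b) ≤
      r (.var i b) + r (.var i (!b)) + ∑ j, r (.conn j i b) := by
  unfold power
  rw [Finset.sum_filter, sum_rnode]
  have h1 : ∀ i' b', (if (redInstance p q C).G.Adj (.var i b) (.var i' b') then
      (redInstance p q C).w (.var i b) (.var i' b') * r (.var i' b') else 0) ≤
      if i' = i then (if b' = !b then r (.var i' b') else 0) else 0 := by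
    intro i' b'
    have := hr (.var i' b')
    simp only [redInstance, SimpleGraph.fromRel_adj, redRel, redW]
    by_cases hi : i' = i
    · subst hi
      cases b <;> cases b' <;> simp
    · have : ¬ i = i' := fun h => hi h.symm
      simp [hi, this]
  have h2 : ∀ j', (if (redInstance p q C).G.Adj (.var i b) (.clause j') then
      (redInstance p q C).w (.var i b) (.clause j') * r (.clause j') else 0) = 0 := by
    intro j'
    simp [redInstance, redW]
  have h3 : ∀ j' i' b', (if (redInstance p q C).G.Adj (.var i b) (.conn j' i' b') then
      (redInstance p q C).w (.var i b) (.conn j' i' b') * r (.conn j' i' b') else 0) ≤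
      if i' = i then (if b' = b then r (.conn j' i' b') else 0) else 0 := by
    intro j' i' b'
    have := hr (.conn j' i' b')
    simp only [redInstance, SimpleGraph.fromRel_adj, redRel, redW]
    split_ifs <;> simp_all
  simp only [h2]
  have k1 := Finset.sum_le_sum fun i' (_ : i' ∈ Finset.univ) =>
    Finset.sum_le_sum fun b' (_ : b' ∈ Finset.univ) => h1 i' b'
  have k3 := Finset.sum_le_sum fun j' (_ : j' ∈ Finset.univ) =>
    Finset.sum_le_sum fun i' (_ : i' ∈ Finset.univ) =>
    Finset.sum_le_sum fun b' (_ : b' ∈ Finset.univ) => h3 j' i' b'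
  have e : ∀ (f : Fin p → Bool → ℝ) (c : Bool),
      ∑ i' : Fin p, ∑ b' : Bool, (if i' = i then (if b' = c then f i' b' else 0) else 0)
      = f i c := by
    intro f c
    rw [Finset.sum_eq_single i (by intro x _ hx; simp [hx]) (by simp)]
    simp
  rw [e (fun i' b' => r (.var i' b'))] at k1
  have e3 : ∀ j', ∑ i' : Fin p, ∑ b' : Bool,
      (if i' = i then (if b' = b then r (.conn j' i' b') else 0) else 0) = r (.conn j' i b) :=
    fun j' => e (fun i' b' => r (.conn j' i' b')) b
  simp only [e3] at k3
  simp only [Finset.sum_const_zero]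
  linarith

/-- reduction, backward direction: if the reduction instance admits a
defending strategy with total resource `p + (q - t)/q` and defending result `0`, then some
truth assignment satisfies at least `t` of the `q` clauses. -/
theorem reduction_backward (p q : ℕ) (hq : 1 ≤ q) (C : Fin q → Finset (Fin p × Bool))
    (t : ℕ) (ht : 1 ≤ t) (htq : t ≤ q)
    (h : ∃ r : RNode p q → ℝ, IsStrategy r ((p : ℝ) + ((q : ℝ) - (t : ℝ)) / (q : ℝ)) ∧
      defResult (redInstance p q C) r = 0) :
    ∃ σ : Fin p → Bool, t ≤ (Finset.univ.filter fun j => Satisfies σ (C j)).card := by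
  obtain ⟨r, ⟨hr, hsum⟩, hres⟩ := h
  have hq0 : (0 : ℝ) < q := by exact_mod_cast hq
  have hgain : ∀ u, gain (redInstance p q C) r u ≤ 0 := by
    intro u
    rw [← hres]
    exact le_ciSup (f := gain (redInstance p q C) r) (Set.finite_range _).bddAbove u
  have hvar : ∀ i b, 1 ≤ r (.var i b) + r (.var i (!b)) + ∑ j, r (.conn j i b) := by
    intro i b
    refine le_trans ?_ (power_var_le C r hr i b)
    by_contra hlt
    have h1 := hgain (.var i b)
    unfold gain at h1
    rw [if_pos (by simpa [redInstance, redLB] using hlt)] at h1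
    simp only [redInstance, redg] at h1
    linarith
  have hcl : ∀ j, r (.clause j) < 1 / (q : ℝ) → ∀ i b, (i, b) ∈ C j →
      1 ≤ r (.conn j i b) + r (.var i b) := by
    intro j hj i b hm
    refine le_trans ?_ (power_conn_le C r hr j i b)
    by_contra hlt
    have h1 := hgain (.clause j)
    unfold gain at h1
    rw [power_clause, if_neg (by simpa [redInstance, redLB] using hr _), if_pos] at h1
    · simp only [redInstance, redg] at h1
      linarith
    · refine ⟨hj, .conn j i b, ?_, ?_⟩
      · simp [redInstance, redRel, hm]
      · simpa [redInstance, redLB] using hlt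
  let T : Fin p → ℝ := fun i => ∑ b, (r (.var i b) + ∑ j, r (.conn j i b))
  have hTdef : ∀ i, T i = (r (.var i true) + ∑ j, r (.conn j i true)) +
      (r (.var i false) + ∑ j, r (.conn j i false)) := fun i => by simp [T]
  have hkn : ∀ i b, 0 ≤ ∑ j, r (.conn j i b) := fun i b => Finset.sum_nonneg fun j _ => hr _
  have hT1 : ∀ i, 1 ≤ T i := by
    intro i
    rw [hTdef]
    have := hvar i true
    have := hkn i false
    simp only [Bool.not_true] at *
    linarith
  have hTsum : ∑ i, T i + ∑ j, r (.clause j) = p + ((q : ℝ) - t) / q := by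
    rw [← hsum, sum_rnode]
    have : ∑ i, T i = ∑ i, ∑ b, r (.var i b) + ∑ j, ∑ i, ∑ b, r (.conn j i b) := by
      simp only [T, Finset.sum_add_distrib]
      congr 1
      rw [Finset.sum_comm (γ := Fin q)]
      refine Finset.sum_congr rfl fun i _ => ?_
      rw [Finset.sum_comm]
    rw [this]; ring
  have hlt1 : ((q : ℝ) - t) / q < 1 := by
    rw [div_lt_one hq0]
    have : (1 : ℝ) ≤ t := by exact_mod_cast ht
    linarith
  have hcs : 0 ≤ ∑ j, r (.clause j) := Finset.sum_nonneg fun j _ => hr _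
  have hesum : ∑ i, (T i - 1) = ∑ i, T i - p := by simp [Finset.sum_sub_distrib]
  have he0 : 0 ≤ ∑ i, (T i - 1) := Finset.sum_nonneg fun i _ => by linarith [hT1 i]
  have hT2 : ∀ i, T i < 2 := by
    intro i
    have := Finset.single_le_sum (f := fun i => T i - 1)
      (fun i _ => by linarith [hT1 i]) (Finset.mem_univ i)
    linarith
  refine ⟨fun i => decide (∃ j, r (.clause j) < 1 / (q : ℝ) ∧ (i, true) ∈ C j), ?_⟩
  have hsub : (Finset.univ.filter fun j : Fin q => r (.clause j) < 1 / (q : ℝ)) ⊆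
      Finset.univ.filter fun j => Satisfies
        (fun i => decide (∃ j, r (.clause j) < 1 / (q : ℝ) ∧ (i, true) ∈ C j)) (C j) := by
    intro j hj
    simp only [Finset.mem_filter, Finset.mem_univ, true_and] at hj ⊢
    rintro ⟨i, b⟩ hm
    cases b
    · simp only [decide_eq_false_iff_not]
      rintro ⟨j', hj', hm'⟩
      have a1 := hcl j hj i false hm
      have a2 := hcl j' hj' i true hm'
      have b1 := Finset.single_le_sum (f := fun j => r (.conn j i false))
        (fun j _ => hr _) (Finset.mem_univ j)
      have b2 := Finset.single_le_sum (f := fun j => r (.conn j i true))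
        (fun j _ => hr _) (Finset.mem_univ j')
      have := hT2 i
      rw [hTdef] at this
      linarith
    · simp only [decide_eq_true_eq]
      exact ⟨j, hj, hm⟩
  refine le_trans ?_ (Finset.card_le_card hsub)
  have hcard := Finset.card_filter_add_card_filter_not (s := (Finset.univ : Finset (Fin q)))
    (fun j => r (.clause j) < 1 / (q : ℝ))
  rw [Finset.card_univ, Fintype.card_fin] at hcard
  set A := (Finset.univ.filter fun j : Fin q => r (.clause j) < 1 / (q : ℝ)).card
  set B := (Finset.univ.filter fun j : Fin q => ¬ r (.clause j) < 1 / (q : ℝ)) with hB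
  have hBle : (B.card : ℝ) * (1 / q) ≤ ∑ j, r (.clause j) := by
    calc (B.card : ℝ) * (1 / q) = ∑ j ∈ B, (1 / (q : ℝ)) := by simp
      _ ≤ ∑ j ∈ B, r (.clause j) := Finset.sum_le_sum fun j hj => by
          simp only [hB, Finset.mem_filter, not_lt] at hj
          exact hj.2
      _ ≤ _ := Finset.sum_le_sum_of_subset_of_nonneg (Finset.subset_univ _) fun j _ _ => hr _
  have hB2 : (B.card : ℝ) / q ≤ ((q : ℝ) - t) / q := by
    rw [div_eq_mul_one_div]
    linarith
  rw [div_le_div_iff_of_pos_right hq0] at hB2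
  have hc : ((A : ℝ) + B.card) = q := by exact_mod_cast hcard
  have : (t : ℝ) ≤ A := by linarith
  exact_mod_cast this
end

section
/- (LP soundness) Let α ≥ 0 and R' ≥ 0. If some defending strategy r with total resource R' has defending result at most α, then LP(α, R') is feasible. Specifically, taking y_u = 1 if p_u ≥ UB_u and y_u = 0 otherwise for each u ∈ B_α, and y_v = 1 if p_v ≥ LB_v and y_v = 0 otherwise for each v ∈ V∖A_α, the pair (y, r) satisfies all constraints of LP(α, R'). -/
open scoped Classical

variable {V : Type*} [Fintype V]

/-- The LP relaxation `LP(α, R')`: reals `y_u` (for `u ∈ B_α ∪ (V∖A_α)`, i.e. `g'_u > α`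
or `¬ g_u > α`) and `r_u ≥ 0` for `u ∈ V` with: `y_u + y_v ≥ 1` for every edge `(u,v)`
with `u ∈ B_α`, `v ∈ V∖A_α`; `p_u ≥ LB_u + y_u·(UB_u − LB_u)` for `u ∈ B_α`;
`p_u ≥ LB_u` for `u ∈ A_α∖B_α`; `p_v ≥ y_v·LB_v` for `v ∈ V∖A_α`; and `∑_u r_u = R'`. -/
def LPFeasible {V : Type*} [Fintype V] (I : DefInstance V) (α R' : ℝ)
    (y r : V → ℝ) : Prop :=
  (∀ u, (I.g' u > α ∨ ¬ I.g u > α) → 0 ≤ y u) ∧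
  (∀ u, 0 ≤ r u) ∧
  (∀ u v, I.G.Adj u v → I.g' u > α → ¬ I.g v > α → 1 ≤ y u + y v) ∧
  (∀ u, I.g' u > α → I.LB u + y u * (I.UB u - I.LB u) ≤ power I r u) ∧
  (∀ u, I.g u > α → ¬ I.g' u > α → I.LB u ≤ power I r u) ∧
  (∀ v, ¬ I.g v > α → y v * I.LB v ≤ power I r v) ∧
  ∑ u, r u = R'

/-- LP soundness: if a defending strategy `r` with total resource `R'` has
defending result at most `α`, then `LP(α, R')` is feasible; specifically, setting `y_u = 1`
iff `p_u ≥ UB_u` for `u ∈ B_α` and `y_v = 1` iff `p_v ≥ LB_v` for `v ∈ V∖A_α` (and `0`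
otherwise), the pair `(y, r)` satisfies all constraints of `LP(α, R')`. -/
theorem LP_sound {V : Type*} [Fintype V] [Nonempty V] (I : DefInstance V)
    (α R' : ℝ) (hα : 0 ≤ α) (hR' : 0 ≤ R')
    (r : V → ℝ) (hr : IsStrategy r R') (hres : defResult I r ≤ α) :
    LPFeasible I α R'
      (fun u => if I.g' u > α then (if I.UB u ≤ power I r u then 1 else 0)
                else (if I.LB u ≤ power I r u then 1 else 0)) r ∧
    ∃ y r₀ : V → ℝ, LPFeasible I α R' y r₀ := by
  have hg : ∀ u, gain I r u ≤ α := fun u =>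
    (le_ciSup (f := gain I r) (Set.finite_range _).bddAbove u).trans hres
  have hp : ∀ u, 0 ≤ power I r u := fun u =>
    add_nonneg (hr.1 u) (Finset.sum_nonneg fun v _ => mul_nonneg (I.w_nonneg u v) (hr.1 v))
  have hLB : ∀ u, I.g u > α → I.LB u ≤ power I r u := by
    intro u hu
    by_contra h
    have := hg u
    rw [gain, if_pos (not_le.mp h)] at this
    linarith
  have key : LPFeasible I α R'
      (fun u => if I.g' u > α then (if I.UB u ≤ power I r u then 1 else 0)
                else (if I.LB u ≤ power I r u then 1 else 0)) r := by
    refine ⟨?_, hr.1, ?_, ?_, ?_, ?_, hr.2⟩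
    · intro u _
      dsimp only
      split_ifs <;> norm_num
    · intro u v huv hu hv
      have hv' : ¬ I.g' v > α := fun h => hv (lt_of_lt_of_le h (I.g'_le_g v))
      have hu' := hLB u (lt_of_lt_of_le hu (I.g'_le_g u))
      dsimp only
      rw [if_pos hu, if_neg hv']
      by_cases h1 : I.UB u ≤ power I r u
      · rw [if_pos h1]; split_ifs <;> norm_num
      · by_cases h2 : I.LB v ≤ power I r v
        · rw [if_pos h2]; split_ifs <;> norm_num
        · exfalso
          have := hg u
          rw [gain, if_neg (not_lt.mpr hu'),
            if_pos ⟨not_le.mp h1, v, huv, not_le.mp h2⟩] at this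
          linarith
    · intro u hu
      have hu' := hLB u (lt_of_lt_of_le hu (I.g'_le_g u))
      dsimp only
      rw [if_pos hu]
      split_ifs <;> linarith
    · intro u hu _
      exact hLB u hu
    · intro v hv
      have hv' : ¬ I.g' v > α := fun h => hv (lt_of_lt_of_le h (I.g'_le_g v))
      have := hp v
      dsimp only
      rw [if_neg hv']
      split_ifs <;> linarith
  exact ⟨key, _, _, key⟩
end

section
/- (LP rounding, 2-approximation) Let α ≥ 0 and R ≥ 0. If (y, r) is a feasible solution of LP(α, R/2), then the map r' defined by r'_u = 2·r_u for all u ∈ V is a defending strategy with total resource R whose defending result is at most α. Consequently, if α is achievable with resource R/2, then α is achievable with resource R via doubling a feasible LP solution. -/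
open scoped Classical

variable {V : Type*} [Fintype V]

theorem power_two_mul_aux {V : Type*} [Fintype V] (I : DefInstance V) (r : V → ℝ) (u : V) :
    power I (fun u => 2 * r u) u = 2 * power I r u := by
  unfold power
  rw [mul_add, Finset.mul_sum]
  congr 1
  exact Finset.sum_congr rfl (fun v _ => by ring)

theorem power_nonneg_aux {V : Type*} [Fintype V] (I : DefInstance V) (r : V → ℝ)
    (hr : ∀ u, 0 ≤ r u) (u : V) : 0 ≤ power I r u := by
  unfold power
  exact add_nonneg (hr u) (Finset.sum_nonneg fun v _ => mul_nonneg (I.w_nonneg u v) (hr v))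

theorem LP_rounding_aux {V : Type*} [Fintype V] [Nonempty V] (I : DefInstance V)
    (α R : ℝ) (hα : 0 ≤ α) (y r : V → ℝ) (h : LPFeasible I α (R / 2) y r) :
    IsStrategy (fun u => 2 * r u) R ∧ defResult I (fun u => 2 * r u) ≤ α := by
  obtain ⟨hy, hr, he, hB, hA, hN, hs⟩ := h
  have hp := power_nonneg_aux I r hr
  have hLB : ∀ u, I.g u > α → I.LB u ≤ power I r u := by
    intro u hu
    by_cases hb : I.g' u > α
    · have h1 := hB u hb
      have h2 := mul_nonneg (hy u (Or.inl hb)) (sub_nonneg.2 (I.LB_le_UB u))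
      linarith
    · exact hA u hu hb
  refine ⟨⟨fun u => by have := hr u; positivity, ?_⟩, ?_⟩
  · rw [← Finset.mul_sum, hs]; ring
  · refine ciSup_le fun u => ?_
    unfold gain
    simp only [power_two_mul_aux]
    split_ifs with h1 h2
    · by_contra hc
      have := hLB u (not_le.1 hc)
      linarith [hp u]
    · obtain ⟨h2, v, hv, h3⟩ := h2
      by_contra hc
      have hc : I.g' u > α := not_le.1 hc
      have hva : ¬ I.g v > α := fun hg => by linarith [hLB v hg, hp v]
      have h4 := hN v hva
      have hyv : y v < 1 / 2 := by
        by_contra hh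
        have := mul_le_mul_of_nonneg_right (not_lt.1 hh) (I.LB_nonneg v)
        linarith
      have h5 := he u v hv hc hva
      have h6 := hB u hc
      have h7 : (1 / 2) * (I.UB u - I.LB u) ≤ y u * (I.UB u - I.LB u) :=
        mul_le_mul_of_nonneg_right (by linarith) (sub_nonneg.2 (I.LB_le_UB u))
      linarith [I.LB_nonneg u]
    · exact hα

theorem achievable_LP_aux {V : Type*} [Fintype V] (I : DefInstance V)
    (α R : ℝ) (r : V → ℝ) (hr : IsStrategy r R) (hd : defResult I r ≤ α) :
    ∃ y, LPFeasible I α R y r := by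
  have hg : ∀ u, gain I r u ≤ α := fun u =>
    (le_ciSup (Set.finite_range (gain I r)).bddAbove u).trans hd
  have hp := power_nonneg_aux I r hr.1
  have hLB : ∀ u, I.g u > α → I.LB u ≤ power I r u := by
    intro u hu
    by_contra hc
    have := hg u
    unfold gain at this
    rw [if_pos (not_le.1 hc)] at this
    linarith
  have hAB : ∀ u, I.g' u > α → I.g u > α := fun u h => lt_of_lt_of_le h (I.g'_le_g u)
  refine ⟨fun u => if (if I.g' u > α then I.UB u ≤ power I r u else I.LB u ≤ power I r u)
    then 1 else 0, ?_, hr.1, ?_, ?_, fun u hu _ => hLB u hu, ?_, hr.2⟩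
  · intro u _
    dsimp only
    split_ifs <;> norm_num
  · intro u v huv hu hv
    have hv' : ¬ I.g' v > α := fun h => hv (hAB v h)
    simp only [if_pos hu, if_neg hv']
    by_cases h1 : I.UB u ≤ power I r u
    · rw [if_pos h1]; split_ifs <;> norm_num
    · have h2 : I.LB v ≤ power I r v := by
        by_contra hc
        have := hg u
        unfold gain at this
        rw [if_neg (not_lt.2 (hLB u (hAB u hu))),
          if_pos ⟨not_le.1 h1, v, huv, not_le.1 hc⟩] at this
        linarith
      rw [if_neg h1, if_pos h2]; norm_num
  · intro u hu
    simp only [if_pos hu]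
    have := hLB u (hAB u hu)
    split_ifs with h <;> linarith
  · intro v hv
    have hv' : ¬ I.g' v > α := fun h => hv (hAB v h)
    simp only [if_neg hv']
    split_ifs with h
    · linarith
    · linarith [hp v]

/-- LP rounding, 2-approximation: if `(y, r)` is feasible for
`LP(α, R/2)`, then `r' = 2·r` is a defending strategy with total resource `R` and
defending result at most `α`; consequently if `α` is achievable with resource `R/2`
then it is achievable with resource `R`. -/
theorem LP_rounding {V : Type*} [Fintype V] [Nonempty V] (I : DefInstance V)
    (α R : ℝ) (hα : 0 ≤ α) (hR : 0 ≤ R) :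
    (∀ y r : V → ℝ, LPFeasible I α (R / 2) y r →
      IsStrategy (fun u => 2 * r u) R ∧ defResult I (fun u => 2 * r u) ≤ α) ∧
    (Achievable I α (R / 2) → Achievable I α R) := by
  refine ⟨fun y r h => LP_rounding_aux I α R hα y r h, ?_⟩
  rintro ⟨r, hr, hd⟩
  obtain ⟨y, hy⟩ := achievable_LP_aux I α (R / 2) r hr hd
  exact ⟨_, LP_rounding_aux I α R hα y r hy⟩
end

section
/- (Integrality gap of 2) In the two-node instance with target α = 0 (so A_0 = B_0 = {u} and V∖A_0 = {v}), the LP relaxation LP(0, 1/2) is feasible: the solution y_u = y_v = 1/2, r_u = 1/2, r_v = 0 satisfies all constraints of LP(0, 1/2). Combined with the fact that no defending strategy with total resource less than 1 achieves defending result 0, this shows the integrality gap of the LP relaxation is at least 2. -/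
open scoped Classical

variable {V : Type*} [Fintype V]

/-- The two-node instance: nodes `u` (= `true`) and `v` (= `false`) joined by a single
edge of weight `w_{uv} = 1`, with `g_u = g'_u = 1`, `g_v = g'_v = 0`, `LB_u = 0`,
`UB_u = 1`, `LB_v = 1`, `UB_v = 2`. -/
noncomputable def twoNode : DefInstance Bool where
  G := ⊤
  w := fun _ _ => 1
  w_nonneg := by intro u v; norm_num
  w_symm := fun _ _ => rfl
  LB := fun x => if x then 0 else 1
  UB := fun x => if x then 1 else 2
  g := fun x => if x then 1 else 0
  g' := fun x => if x then 1 else 0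
  LB_nonneg := by intro u; cases u <;> norm_num
  LB_le_UB := by intro u; cases u <;> norm_num
  g'_nonneg := by intro u; cases u <;> norm_num
  g'_le_g := by intro u; cases u <;> norm_num

theorem twoNode_power (r : Bool → ℝ) (u : Bool) : power twoNode r u = r true + r false := by
  have h : ∀ u : Bool, Finset.univ.filter (fun v => twoNode.G.Adj u v) = {!u} := by
    intro u
    ext v
    cases u <;> cases v <;> simp [twoNode]
  unfold power
  rw [h, Finset.sum_singleton]
  cases u <;> simp [twoNode, add_comm]

/-- integrality gap of 2: in the two-node instance with target `α = 0`,
the solution `y_u = y_v = 1/2`, `r_u = 1/2`, `r_v = 0` is feasible for `LP(0, 1/2)`,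
while no defending strategy with total resource less than `1` achieves defending
result `0`. -/
theorem twoNode_integrality_gap :
    LPFeasible twoNode 0 (1 / 2) (fun _ => 1 / 2) (fun x => if x then 1 / 2 else 0) ∧
    (∀ R : ℝ, R < 1 → ¬ Achievable twoNode 0 R) := by
  constructor
  · refine ⟨?_, ?_, ?_, ?_, ?_, ?_, ?_⟩
    · intro u _; norm_num
    · intro u; cases u <;> norm_num
    · intro u v _ _ _; norm_num
    · intro u; rw [twoNode_power]; cases u <;> norm_num [twoNode]
    · intro u; rw [twoNode_power]; cases u <;> norm_num [twoNode]
    · intro u; rw [twoNode_power]; cases u <;> norm_num [twoNode]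
    · simp
  · rintro R hR ⟨r, ⟨h0, hs⟩, hd⟩
    have hsum : r true + r false = R := by simpa using hs
    have hle : gain twoNode r true ≤ 0 :=
      le_trans (le_ciSup (f := fun u => gain twoNode r u) (Set.finite_range _).bddAbove true) hd
    have hg : gain twoNode r true = 1 := by
      have h1 : ¬ power twoNode r true < twoNode.LB true := by
        rw [twoNode_power]
        have := h0 true
        have := h0 false
        simp [twoNode]
        linarith
      have h2 : power twoNode r true < twoNode.UB true ∧
          ∃ v, twoNode.G.Adj true v ∧ power twoNode r v < twoNode.LB v := by
        refine ⟨?_, false, ?_, ?_⟩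
        · rw [twoNode_power, hsum]; simpa [twoNode] using hR
        · simp [twoNode]
        · rw [twoNode_power, hsum]; simpa [twoNode] using hR
      unfold gain
      rw [if_neg h1, if_pos h2]
      simp [twoNode]
    linarith
end
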